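/- arXiv:math/0206148 — 2 statements merged into one kernel-verified Lean document; each statement's English description precedes it below -/
import Mathlib

section
/- For every n ∈ ℕ, every commutative ring k and every Q ∈ k, the free k-module with basis p_n, equipped with the k-bilinear product a·b = Q^{c(a,b)} (a∘b), is an associative unital k-algebra (the partition algebra P_n(Q)), whose unit is the identity partition with parts {i, i′} for i = 1,…,n. In particular (p_n, ∘) is a monoid with identity the identity partition. -/
attribute [local instance] Classical.propDecidable

namespace RamifiedPartition

/-- The two-row set `[n] ⊔ [n]′`. -/
abbrev Row2 (n : ℕ) := Sum (Fin n) (Fin n)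

/-- `p_n`: partitions (equivalence relations) of `[n] ⊔ [n]′`,
with `a ≤ b` meaning that `a` refines `b`. -/
abbrev PN (n : ℕ) := Setoid (Row2 n)

/-- The three-row set `[n] ⊔ [n]′ ⊔ [n]″`. -/
abbrev Row3 (n : ℕ) := Sum (Fin n) (Sum (Fin n) (Fin n))

variable {n : ℕ}

/-- Embedding of the two-row set as rows 1,2 of the three-row set. -/
def emb12 : Row2 n → Row3 n := Sum.elim Sum.inl (fun i => Sum.inr (Sum.inl i))

/-- Embedding of the two-row set as rows 2,3 of the three-row set. -/
def emb23 : Row2 n → Row3 n :=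
  Sum.elim (fun i => Sum.inr (Sum.inl i)) (fun i => Sum.inr (Sum.inr i))

/-- Embedding of the two-row set as rows 1,3 of the three-row set. -/
def emb13 : Row2 n → Row3 n := Sum.elim Sum.inl (fun i => Sum.inr (Sum.inr i))

/-- `D_u(a,b)`: the equivalence relation on the three-row set generated by `a`
placed on rows 1,2 and `b` placed on rows 2,3. -/
def Du (a b : PN n) : Setoid (Row3 n) :=
  Relation.EqvGen.setoid (fun x y =>
    (∃ u v : Row2 n, a.r u v ∧ x = emb12 u ∧ y = emb12 v) ∨
    (∃ u v : Row2 n, b.r u v ∧ x = emb23 u ∧ y = emb23 v))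

/-- The composite `a ∘ b`: the restriction of `D_u(a,b)` to rows 1,3
(relabelled as `[n] ⊔ [n]′`). -/
def comp (a b : PN n) : PN n := Setoid.comap emb13 (Du a b)

/-- `c(a,b)`: the number of classes of `D_u(a,b)` contained entirely in the
middle row `[n]′`. -/
noncomputable def cnum (a b : PN n) : ℕ :=
  Nat.card {C : Quotient (Du a b) //
    ∀ x : Row3 n, Quotient.mk (Du a b) x = C → ∃ i : Fin n, x = Sum.inr (Sum.inl i)}

/-- The identity partition of `[n] ⊔ [n]′`, with parts `{i, i′}` for `i = 1,…,n`. -/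
def oneP (n : ℕ) : PN n := Setoid.ker (Sum.elim id id)

end RamifiedPartition

namespace RamifiedPartition

variable {n : ℕ} {k : Type*} [CommRing k]

/-- The `k`-bilinear product on the free `k`-module with basis `p_n`, determined
on basis elements by `a · b = Q^{c(a,b)} (a ∘ b)`. -/
noncomputable def pmul (Q : k) (x y : PN n →₀ k) : PN n →₀ k :=
  x.sum fun a xa => y.sum fun b yb =>
    Finsupp.single (comp a b) (xa * yb * Q ^ cnum a b)

/-- The basis element corresponding to the identity partition. -/
noncomputable def pone (n : ℕ) (k : Type*) [CommRing k] : PN n →₀ k :=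
  Finsupp.single (oneP n) 1

/-- The two-colouring `(p, q)` of the two-row set is constant on the parts of `a`. -/
def Resp (a : PN n) (p q : Fin n → Bool) : Prop :=
  ∀ u v : Row2 n, a.r u v → Sum.elim p q u = Sum.elim p q v

/-- The matrix of `a` acting on two-colourings. -/
noncomputable def colMat (a : PN n) : Matrix (Fin n → Bool) (Fin n → Bool) ℕ :=
  fun p q => if Resp a p q then 1 else 0

theorem resp_Du {a b : PN n} {p q r : Fin n → Bool} (h1 : Resp a p q) (h2 : Resp b q r)
    {x y : Row3 n} (h : (Du a b).r x y) :
    (Sum.elim p (Sum.elim q r) x : Bool) = Sum.elim p (Sum.elim q r) y := by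
  change Relation.EqvGen _ x y at h
  induction h with
  | rel x y h =>
    rcases h with ⟨u, v, h, rfl, rfl⟩ | ⟨u, v, h, rfl, rfl⟩
    · have := h1 u v h
      rcases u with u | u <;> rcases v with v | v <;> simpa [emb12] using this
    · have := h2 u v h
      rcases u with u | u <;> rcases v with v | v <;> simpa [emb23] using this
  | refl x => rfl
  | symm x y _ ih => exact ih.symm
  | trans x y z _ _ ih1 ih2 => exact ih1.trans ih2

theorem resp_comp_of {a b : PN n} {p q r : Fin n → Bool} (h1 : Resp a p q) (h2 : Resp b q r) :
    Resp (comp a b) p r := by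
  intro u v h
  have := resp_Du h1 h2 (x := emb13 u) (y := emb13 v) h
  rcases u with u | u <;> rcases v with v | v <;> simpa [emb13] using this

theorem Du_left {a : PN n} (b : PN n) {u v : Row2 n} (h : a.r u v) :
    (Du a b).r (emb12 u) (emb12 v) :=
  Relation.EqvGen.rel _ _ (Or.inl ⟨u, v, h, rfl, rfl⟩)

theorem Du_right (a : PN n) {b : PN n} {u v : Row2 n} (h : b.r u v) :
    (Du a b).r (emb23 u) (emb23 v) :=
  Relation.EqvGen.rel _ _ (Or.inr ⟨u, v, h, rfl, rfl⟩)

/-- A class of `Du a b` contained in the middle row. -/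
def Closed (a b : PN n) (C : Quotient (Du a b)) : Prop :=
  ∀ x : Row3 n, Quotient.mk (Du a b) x = C → ∃ i : Fin n, x = Sum.inr (Sum.inl i)

theorem not_closed {a b : PN n} {C : Quotient (Du a b)} (h : ¬ Closed a b C) :
    ∃ u : Row2 n, Quotient.mk (Du a b) (emb13 u) = C := by
  unfold Closed at h
  push Not at h
  obtain ⟨x, hx, h⟩ := h
  rcases x with i | i | i
  · exact ⟨Sum.inl i, hx⟩
  · exact absurd rfl (h i)
  · exact ⟨Sum.inr i, hx⟩

theorem emb13_not_closed (a b : PN n) (u : Row2 n) :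
    ¬ Closed a b (Quotient.mk (Du a b) (emb13 u)) := by
  intro h
  obtain ⟨i, hi⟩ := h _ rfl
  rcases u with u | u <;> simp [emb13] at hi

/-- Reading off the colours of the closed classes. -/
def colOf (a b : PN n) (p r : Fin n → Bool)
    (q : {q : Fin n → Bool // Resp a p q ∧ Resp b q r}) :
    {C : Quotient (Du a b) // Closed a b C} → Bool :=
  fun C => Quotient.lift (Sum.elim p (Sum.elim q.1 r) : Row3 n → Bool)
    (fun _ _ h => resp_Du q.2.1 q.2.2 h) C.1

theorem elim_emb13 (p q r : Fin n → Bool) (u : Row2 n) :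
    (Sum.elim p (Sum.elim q r) (emb13 u) : Bool) = Sum.elim p r u := by
  rcases u with u | u <;> rfl

theorem colOf_bijective (a b : PN n) (p r : Fin n → Bool) (hpr : Resp (comp a b) p r) :
    Function.Bijective (colOf a b p r) := by
  constructor
  · rintro ⟨q, hq⟩ ⟨q', hq'⟩ h
    apply Subtype.ext
    funext i
    by_cases hc : Closed a b (Quotient.mk (Du a b) (Sum.inr (Sum.inl i)))
    · exact congrFun h ⟨_, hc⟩
    · obtain ⟨u, hu⟩ := not_closed hc
      have hu := Quotient.exact hu
      have e1 := resp_Du hq.1 hq.2 hu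
      have e2 := resp_Du hq'.1 hq'.2 hu
      rw [elim_emb13] at e1 e2
      exact e1.symm.trans e2
  · intro g
    let G : Quotient (Du a b) → Bool := fun C =>
      if h : Closed a b C then g ⟨C, h⟩
      else decide (∃ u : Row2 n, Quotient.mk (Du a b) (emb13 u) = C ∧ Sum.elim p r u = true)
    let F : Row3 n → Bool := fun x => G (Quotient.mk (Du a b) x)
    have hF : ∀ x y, (Du a b).r x y → F x = F y := fun x y h =>
      congrArg G (Quotient.sound h)
    have h13 : ∀ u, F (emb13 u) = Sum.elim p r u := by
      intro u
      have : F (emb13 u) = decide (∃ v : Row2 n, Quotient.mk (Du a b) (emb13 v) =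
          Quotient.mk (Du a b) (emb13 u) ∧ Sum.elim p r v = true) :=
        dif_neg (emb13_not_closed a b u)
      rw [this, Bool.eq_iff_iff, decide_eq_true_iff]
      constructor
      · rintro ⟨v, hv, h⟩
        have hvu : (Du a b).r (emb13 v) (emb13 u) := Quotient.exact hv
        rw [← hpr v u hvu]
        exact h
      · intro h
        exact ⟨u, rfl, h⟩
    let q : Fin n → Bool := fun i => F (Sum.inr (Sum.inl i))
    have hE : (Sum.elim p (Sum.elim q r) : Row3 n → Bool) = F := by
      funext x
      rcases x with i | i | i
      · exact (h13 (Sum.inl i)).symm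
      · rfl
      · exact (h13 (Sum.inr i)).symm
    have h12 : ∀ u, (Sum.elim p q u : Bool) = F (emb12 u) := by
      intro u
      rw [← hE]
      rcases u with u | u <;> rfl
    have h23 : ∀ u, (Sum.elim q r u : Bool) = F (emb23 u) := by
      intro u
      rw [← hE]
      rcases u with u | u <;> rfl
    refine ⟨⟨q, ?_, ?_⟩, ?_⟩
    · intro u v h
      rw [h12, h12]
      exact hF _ _ (Du_left b h)
    · intro u v h
      rw [h23, h23]
      exact hF _ _ (Du_right a h)
    · funext ⟨C, hC⟩
      induction C using Quotient.inductionOn with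
      | _ x =>
        change (Sum.elim p (Sum.elim q r) : Row3 n → Bool) x = _
        rw [hE]
        exact dif_pos hC

theorem card_fiber (a b : PN n) (p r : Fin n → Bool) (hpr : Resp (comp a b) p r) :
    Nat.card {q : Fin n → Bool // Resp a p q ∧ Resp b q r} = 2 ^ cnum a b := by
  rw [Nat.card_eq_of_bijective _ (colOf_bijective a b p r hpr), Nat.card_fun]
  simp [cnum, Closed]

theorem colMat_mul (a b : PN n) :
    colMat a * colMat b = 2 ^ cnum a b • colMat (comp a b) := by
  ext p r
  have h : (colMat a * colMat b) p r =
      Nat.card {q : Fin n → Bool // Resp a p q ∧ Resp b q r} := by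
    rw [Matrix.mul_apply, Nat.card_eq_fintype_card, Fintype.card_subtype,
      Finset.card_filter]
    refine Finset.sum_congr rfl fun q _ => ?_
    unfold colMat
    by_cases h1 : Resp a p q <;> by_cases h2 : Resp b q r <;> simp [h1, h2]
  rw [h, Matrix.smul_apply, colMat]
  split_ifs with hc
  · rw [card_fiber a b p r hc]; simp
  · have : IsEmpty {q : Fin n → Bool // Resp a p q ∧ Resp b q r} :=
      ⟨fun q => hc (resp_comp_of q.2.1 q.2.2)⟩
    simp

theorem resp_const (a : PN n) : Resp a (fun _ => true) (fun _ => true) := by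
  intro u v _
  rcases u with u | u <;> rcases v with v | v <;> rfl

theorem le_of_resp {a b : PN n} (h : ∀ p q, Resp b p q → Resp a p q) {u v : Row2 n}
    (huv : a.r u v) : b.r u v := by
  let f : Row2 n → Bool := fun w => decide (b.r u w)
  have hf : (Sum.elim (fun i => f (Sum.inl i)) (fun i => f (Sum.inr i)) : Row2 n → Bool) = f := by
    funext w
    rcases w with w | w <;> rfl
  have hb : Resp b (fun i => f (Sum.inl i)) (fun i => f (Sum.inr i)) := by
    intro x y hxy
    rw [hf]
    simp only [f, decide_eq_decide]
    exact ⟨fun h => b.iseqv.trans h hxy, fun h => b.iseqv.trans h (b.iseqv.symm hxy)⟩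
  have := h _ _ hb u v huv
  rw [hf] at this
  have h2 : f u = true := decide_eq_true (b.iseqv.refl u)
  rw [h2] at this
  exact of_decide_eq_true this.symm

/-- `colMat` is injective, even up to powers of two. -/
theorem colMat_scaled_inj {a b : PN n} {s t : ℕ}
    (h : 2 ^ s • colMat a = 2 ^ t • colMat b) : s = t ∧ a = b := by
  have key : ∀ p q, (2 ^ s * (if Resp a p q then 1 else 0) : ℕ) =
      2 ^ t * (if Resp b p q then 1 else 0) := fun p q => by
    have := congrFun (congrFun h p) q
    simpa [colMat, Matrix.smul_apply] using this
  constructor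
  · have := key (fun _ => true) (fun _ => true)
    rw [if_pos (resp_const a), if_pos (resp_const b)] at this
    simpa using this
  · have hr : ∀ p q, Resp a p q ↔ Resp b p q := by
      intro p q
      have := key p q
      have hs : (2 ^ s : ℕ) ≠ 0 := by positivity
      have ht : (2 ^ t : ℕ) ≠ 0 := by positivity
      clear key h
      by_cases h1 : Resp a p q <;> by_cases h2 : Resp b p q <;>
        simp only [h1, h2, if_true, if_false] at this ⊢ <;> omega
    ext u v
    exact ⟨le_of_resp fun p q => (hr p q).2, le_of_resp fun p q => (hr p q).1⟩

theorem colMat_one : colMat (oneP n) = 1 := by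
  ext p q
  have : Resp (oneP n) p q ↔ p = q := by
    constructor
    · intro h
      funext i
      exact h (Sum.inl i) (Sum.inr i) rfl
    · rintro rfl u v h
      have h : (Sum.elim id id u : Fin n) = Sum.elim id id v := h
      rcases u with u | u <;> rcases v with v | v <;> simp_all
  simp only [colMat, this, Matrix.one_apply]

theorem comp_assoc_cnum (a b c : PN n) :
    cnum a b + cnum (comp a b) c = cnum b c + cnum a (comp b c) ∧
      comp (comp a b) c = comp a (comp b c) := by
  apply colMat_scaled_inj
  have := Matrix.mul_assoc (colMat a) (colMat b) (colMat c)
  rw [colMat_mul, colMat_mul, Matrix.smul_mul, Matrix.mul_smul, colMat_mul, colMat_mul,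
    smul_smul, smul_smul, ← pow_add, ← pow_add] at this
  exact this

theorem one_comp_cnum (a : PN n) : cnum (oneP n) a = 0 ∧ comp (oneP n) a = a := by
  apply colMat_scaled_inj
  rw [← colMat_mul, colMat_one]
  simp

theorem comp_one_cnum (a : PN n) : cnum a (oneP n) = 0 ∧ comp a (oneP n) = a := by
  apply colMat_scaled_inj
  rw [← colMat_mul, colMat_one]
  simp

theorem pmul_add_left (Q : k) (x y z : PN n →₀ k) :
    pmul Q (x + y) z = pmul Q x z + pmul Q y z := by
  unfold pmul
  apply Finsupp.sum_add_index'
  · intro a; simp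
  · intro a r s
    rw [← Finsupp.sum_add]
    simp only [add_mul, Finsupp.single_add]

theorem pmul_add_right (Q : k) (x y z : PN n →₀ k) :
    pmul Q x (y + z) = pmul Q x y + pmul Q x z := by
  unfold pmul
  rw [← Finsupp.sum_add]
  refine Finsupp.sum_congr fun a _ => ?_
  apply Finsupp.sum_add_index'
  · intro a; simp
  · intro b r s
    simp only [mul_add, add_mul, Finsupp.single_add]

theorem pmul_zero_left (Q : k) (x : PN n →₀ k) : pmul Q 0 x = 0 := by
  simp [pmul]

theorem pmul_zero_right (Q : k) (x : PN n →₀ k) : pmul Q x 0 = 0 := by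
  simp [pmul]

theorem pmul_single (Q : k) (a b : PN n) (r s : k) :
    pmul Q (Finsupp.single a r) (Finsupp.single b s) =
      Finsupp.single (comp a b) (r * s * Q ^ cnum a b) := by
  simp [pmul]

theorem pmul_smul_left (Q r : k) (x y : PN n →₀ k) : pmul Q (r • x) y = r • pmul Q x y := by
  induction x using Finsupp.induction_linear with
  | zero => simp [pmul_zero_left]
  | add x x' h h' => rw [smul_add, pmul_add_left, pmul_add_left, smul_add, h, h']
  | single a s =>
    induction y using Finsupp.induction_linear with
    | zero => simp [pmul_zero_right]
    | add y y' h h' => rw [pmul_add_right, pmul_add_right, smul_add, h, h']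
    | single b t =>
      rw [Finsupp.smul_single, pmul_single, pmul_single, Finsupp.smul_single]
      simp only [smul_eq_mul, mul_assoc]

theorem pmul_smul_right (Q r : k) (x y : PN n →₀ k) : pmul Q x (r • y) = r • pmul Q x y := by
  induction x using Finsupp.induction_linear with
  | zero => simp [pmul_zero_left]
  | add x x' h h' => rw [pmul_add_left, pmul_add_left, smul_add, h, h']
  | single a s =>
    induction y using Finsupp.induction_linear with
    | zero => simp [pmul_zero_right]
    | add y y' h h' => rw [smul_add, pmul_add_right, pmul_add_right, smul_add, h, h']
    | single b t =>
      rw [Finsupp.smul_single, pmul_single, pmul_single, Finsupp.smul_single]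
      congr 1
      simp only [smul_eq_mul]
      ring

theorem pmul_assoc (Q : k) (x y z : PN n →₀ k) :
    pmul Q (pmul Q x y) z = pmul Q x (pmul Q y z) := by
  induction x using Finsupp.induction_linear with
  | zero => simp only [pmul_zero_left]
  | add x x' h h' => simp only [pmul_add_left, h, h']
  | single a r =>
    induction y using Finsupp.induction_linear with
    | zero => simp only [pmul_zero_left, pmul_zero_right]
    | add y y' h h' => simp only [pmul_add_left, pmul_add_right, h, h']
    | single b s =>
      induction z using Finsupp.induction_linear with
      | zero => simp only [pmul_zero_right]
      | add z z' h h' => simp only [pmul_add_right, h, h']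
      | single c t =>
        obtain ⟨h1, h2⟩ := comp_assoc_cnum a b c
        simp only [pmul_single, h2]
        congr 1
        calc r * s * Q ^ cnum a b * t * Q ^ cnum (comp a b) c
            = r * s * t * Q ^ (cnum a b + cnum (comp a b) c) := by ring
          _ = r * (s * t * Q ^ cnum b c) * Q ^ cnum a (comp b c) := by rw [h1]; ring

theorem pone_pmul (Q : k) (x : PN n →₀ k) : pmul Q (pone n k) x = x := by
  induction x using Finsupp.induction_linear with
  | zero => exact pmul_zero_right _ _
  | add x x' h h' => rw [pmul_add_right, h, h']
  | single a r =>
    obtain ⟨h1, h2⟩ := one_comp_cnum a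
    rw [pone, pmul_single, h1, h2]
    simp

theorem pmul_pone (Q : k) (x : PN n →₀ k) : pmul Q x (pone n k) = x := by
  induction x using Finsupp.induction_linear with
  | zero => exact pmul_zero_left _ _
  | add x x' h h' => rw [pmul_add_left, h, h']
  | single a r =>
    obtain ⟨h1, h2⟩ := comp_one_cnum a
    rw [pone, pmul_single, h1, h2]
    simp

/-- the free `k`-module with basis `p_n`, with the bilinear product
`a·b = Q^{c(a,b)} (a∘b)`, is an associative unital `k`-algebra with unit the
identity partition; in particular `(p_n, ∘)` is a monoid with identity the
identity partition. -/
theorem partitionAlgebra_isAlgebra (n : ℕ) (k : Type*) [CommRing k] (Q : k) :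
    (∀ x y z : PN n →₀ k, pmul Q (pmul Q x y) z = pmul Q x (pmul Q y z)) ∧
    (∀ x : PN n →₀ k, pmul Q (pone n k) x = x) ∧
    (∀ x : PN n →₀ k, pmul Q x (pone n k) = x) ∧
    (∀ (r : k) (x y : PN n →₀ k), pmul Q (r • x) y = r • pmul Q x y) ∧
    (∀ (r : k) (x y : PN n →₀ k), pmul Q x (r • y) = r • pmul Q x y) ∧
    (∀ x y z : PN n →₀ k, pmul Q (x + y) z = pmul Q x z + pmul Q y z) ∧
    (∀ x y z : PN n →₀ k, pmul Q x (y + z) = pmul Q x y + pmul Q x z) ∧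
    (∀ a b c : PN n, comp (comp a b) c = comp a (comp b c)) ∧
    (∀ a : PN n, comp (oneP n) a = a) ∧
    (∀ a : PN n, comp a (oneP n) = a) := by
  exact ⟨pmul_assoc Q, pone_pmul Q, pmul_pone Q, pmul_smul_left Q, pmul_smul_right Q,
    pmul_add_left Q, pmul_add_right Q, fun a b c => (comp_assoc_cnum a b c).2,
    fun a => (one_comp_cnum a).2, fun a => (comp_one_cnum a).2⟩

end RamifiedPartition
end

section
/- The Gram matrix G_3 (a 12 × 12 matrix, since a 3-element set has exactly twelve 2-ramified partitions) has determinant det G_3 = Q₁¹² Q₂²⁰ (Q₁ − 2)(Q₂ − 2)(Q₁ − 1)⁷ (Q₂ − 1)⁷ in ℤ[Q₁,Q₂]. -/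
attribute [local instance] Classical.propDecidable

namespace RamifiedGram

instance setoidFinite {α : Type*} [Finite α] : Finite (Setoid α) :=
  Finite.of_injective (fun s => s.r) (fun s t h => by cases s; cases t; cases h; rfl)

/-- The 2-ramified partitions of `Fin n`: pairs of equivalence relations
`(a₁, a₂)` with `a₁ ≤ a₂` (`a₁` refines `a₂`). -/
def RamPart (n : ℕ) : Type := {p : Setoid (Fin n) × Setoid (Fin n) // p.1 ≤ p.2}

noncomputable instance (n : ℕ) : Fintype (RamPart n) := by
  unfold RamPart; exact Fintype.ofFinite _

/-- The Gram matrix `G_n` over `ℤ[Q₁,Q₂]` (with `Q₁ = X 0`, `Q₂ = X 1`):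
the `(a,b)` entry is `Q₁^{k(a,b)} Q₂^{h(a,b)}` where `k(a,b)` is the number of
parts of the join `a₂ ∨ b₂` of the coarser components and `h(a,b)` is the
number of parts of the join `a₁ ∨ b₁` of the finer components. -/
noncomputable def gram (n : ℕ) : Matrix (RamPart n) (RamPart n) (MvPolynomial (Fin 2) ℤ) :=
  fun a b =>
    MvPolynomial.X 0 ^ Nat.card (Quotient (a.1.2 ⊔ b.1.2)) *
    MvPolynomial.X 1 ^ Nat.card (Quotient (a.1.1 ⊔ b.1.1))

end RamifiedGram

namespace RamifiedGram

open MvPolynomial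

section helpers

attribute [local instance 10] Classical.propDecidable

/-- Labellings whose kernels are the five partitions of a three-element set. -/
def lab : Fin 5 → Fin 3 → Fin 3 :=
  ![![0, 1, 2], ![0, 0, 1], ![0, 1, 0], ![0, 1, 1], ![0, 0, 0]]

/-- The five partitions. -/
def part (i : Fin 5) : Setoid (Fin 3) := Setoid.ker (lab i)

/-- Refinement order on the labels. -/
def lle (i j : Fin 5) : Bool := i = j || i = 0 || j = 4

/-- Join on labels. -/
def ljoin (i j : Fin 5) : Fin 5 := if i = j then i else if i = 0 then j else if j = 0 then i else 4

/-- Number of parts. -/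
def lcard : Fin 5 → ℕ := ![3, 2, 2, 2, 1]

theorem part_le_iff (i j : Fin 5) : part i ≤ part j ↔ lle i j = true := by
  have h : part i ≤ part j ↔ ∀ a b, lab i a = lab i b → lab j a = lab j b := Iff.rfl
  rw [h]
  clear h
  revert i j
  decide

theorem part_injective : Function.Injective part := by
  intro i j h
  have h1 := (part_le_iff i j).1 h.le
  have h2 := (part_le_iff j i).1 h.ge
  clear h
  revert i j
  decide

theorem part_surjective (r : Setoid (Fin 3)) : ∃ i, part i = r := by
  have key : ∀ i : Fin 5, (r 0 1 ↔ lab i 0 = lab i 1) → (r 0 2 ↔ lab i 0 = lab i 2) →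
      (r 1 2 ↔ lab i 1 = lab i 2) → part i = r := by
    intro i h1 h2 h3
    have h1' : r 1 0 ↔ lab i 1 = lab i 0 := by rw [r.comm', h1, eq_comm]
    have h2' : r 2 0 ↔ lab i 2 = lab i 0 := by rw [r.comm', h2, eq_comm]
    have h3' : r 2 1 ↔ lab i 2 = lab i 1 := by rw [r.comm', h3, eq_comm]
    ext a b
    change lab i a = lab i b ↔ r a b
    fin_cases a <;> fin_cases b
    · exact iff_of_true rfl (r.refl' _)
    · exact h1.symm
    · exact h2.symm
    · exact h1'.symm
    · exact iff_of_true rfl (r.refl' _)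
    · exact h3.symm
    · exact h2'.symm
    · exact h3'.symm
    · exact iff_of_true rfl (r.refl' _)
  have t1 : r 0 1 → r 0 2 → r 1 2 := fun h h' => r.trans' (r.symm' h) h'
  have t2 : r 0 1 → r 1 2 → r 0 2 := fun h h' => r.trans' h h'
  have t3 : r 0 2 → r 1 2 → r 0 1 := fun h h' => r.trans' h (r.symm' h')
  by_cases h1 : r 0 1
  · by_cases h2 : r 0 2
    · exact ⟨4, key 4 (iff_of_true h1 (by decide)) (iff_of_true h2 (by decide))
        (iff_of_true (t1 h1 h2) (by decide))⟩
    · exact ⟨1, key 1 (iff_of_true h1 (by decide)) (iff_of_false h2 (by decide))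
        (iff_of_false (fun h => h2 (t2 h1 h)) (by decide))⟩
  · by_cases h2 : r 0 2
    · exact ⟨2, key 2 (iff_of_false h1 (by decide)) (iff_of_true h2 (by decide))
        (iff_of_false (fun h => h1 (t3 h2 h)) (by decide))⟩
    · by_cases h3 : r 1 2
      · exact ⟨3, key 3 (iff_of_false h1 (by decide)) (iff_of_false h2 (by decide))
          (iff_of_true h3 (by decide))⟩
      · exact ⟨0, key 0 (iff_of_false h1 (by decide)) (iff_of_false h2 (by decide))
          (iff_of_false h3 (by decide))⟩

theorem part_sup (i j : Fin 5) : part i ⊔ part j = part (ljoin i j) := by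
  apply le_antisymm
  · apply sup_le <;> rw [part_le_iff] <;> revert i j <;> decide
  · obtain ⟨k, hk⟩ := part_surjective (part i ⊔ part j)
    have h1 : part i ≤ part k := hk ▸ le_sup_left
    have h2 : part j ≤ part k := hk ▸ le_sup_right
    rw [← hk]
    rw [part_le_iff] at *
    clear hk
    revert i j k
    decide

theorem part_card (i : Fin 5) : Nat.card (Quotient (part i)) = lcard i := by
  have h : Nat.card (Quotient (part i)) = Nat.card (Set.range (lab i)) :=
    Nat.card_congr (Setoid.quotientKerEquivRange (lab i))
  have h' : Nat.card (Set.range (lab i)) = (Finset.univ.image (lab i)).card := by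
    rw [← Set.image_univ, ← Finset.coe_univ, ← Finset.coe_image, Nat.card_coe_set_eq,
      Set.ncard_coe_finset]
  rw [h, h']
  clear h h'
  revert i
  decide

/-- Finer components of the twelve ramified partitions. -/
def fine : Fin 12 → Fin 5 := ![0, 0, 0, 0, 1, 2, 3, 0, 1, 2, 3, 4]

/-- Coarser components of the twelve ramified partitions. -/
def coarse : Fin 12 → Fin 5 := ![0, 1, 2, 3, 1, 2, 3, 4, 4, 4, 4, 4]

/-- Enumeration of the ramified partitions. -/
def enum (i : Fin 12) : RamPart 3 :=
  ⟨(part (fine i), part (coarse i)), (part_le_iff _ _).2 (by revert i; decide)⟩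

theorem enum_bijective : Function.Bijective enum := by
  constructor
  · intro i j h
    have h' := congrArg Subtype.val h
    have h1 : fine i = fine j := part_injective (congrArg Prod.fst h')
    have h2 : coarse i = coarse j := part_injective (congrArg Prod.snd h')
    clear h h'
    revert i j
    decide
  · rintro ⟨⟨a, b⟩, hab⟩
    obtain ⟨i, rfl⟩ := part_surjective a
    obtain ⟨j, rfl⟩ := part_surjective b
    have hij := (part_le_iff i j).1 hab
    have h : ∃ k, fine k = i ∧ coarse k = j := by
      clear hab
      revert i j
      decide
    obtain ⟨k, rfl, rfl⟩ := h
    exact ⟨k, rfl⟩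

/-- Order relation on the enumerated ramified partitions. -/
def rle (i j : Fin 12) : Bool := lle (fine i) (fine j) && lle (coarse i) (coarse j)

theorem rle_join (i j : Fin 12) : ∃ k : Fin 12, fine k = ljoin (fine i) (fine j) ∧
    coarse k = ljoin (coarse i) (coarse j) ∧ ∀ c, rle k c = (rle i c && rle j c) := by
  revert i j
  decide +kernel

variable {R : Type*} [CommRing R]

/-- The zeta matrix. -/
def zeta (R : Type*) [CommRing R] : Matrix (Fin 12) (Fin 12) R :=
  fun i j => if rle i j = true then 1 else 0

/-- Moebius inverse of the Gram function. -/
def moeb (x y : R) : Fin 12 → R :=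
  ![x * y ^ 3 * (x - 1) * (x - 2),
    x * (x - 1) * y ^ 2 * (y - 1), x * (x - 1) * y ^ 2 * (y - 1), x * (x - 1) * y ^ 2 * (y - 1),
    x * (x - 1) * y ^ 2, x * (x - 1) * y ^ 2, x * (x - 1) * y ^ 2,
    x * y * (y - 1) * (y - 2),
    x * y * (y - 1), x * y * (y - 1), x * y * (y - 1),
    x * y]

theorem moeb_sum (x y : R) (k : Fin 12) :
    ∑ c, (if rle k c = true then moeb x y c else 0) =
      x ^ lcard (coarse k) * y ^ lcard (fine k) := by
  fin_cases k <;>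
    simp [Fin.sum_univ_succ, rle, lle, fine, coarse, lcard, moeb] <;> ring

theorem det_zeta : (zeta R).det = 1 := by
  rw [Matrix.det_of_isUpperTriangular]
  · apply Finset.prod_eq_one
    intro i _
    have : rle i i = true := by revert i; decide
    simp [zeta, this]
  · intro i j hij
    have h : ∀ i j : Fin 12, j < i → rle i j = false := by decide +kernel
    simp [zeta, h i j hij]

theorem gram_factor : (gram 3).submatrix enum enum =
    zeta _ * Matrix.diagonal (moeb (X 0) (X 1)) * (zeta _).transpose := by
  ext1 i j
  obtain ⟨k, h1, h2, h3⟩ := rle_join i j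
  have hs := moeb_sum (X 0 : MvPolynomial (Fin 2) ℤ) (X 1) k
  rw [Matrix.mul_apply]
  simp only [Matrix.mul_diagonal, Matrix.transpose_apply]
  have : gram 3 (enum i) (enum j) =
      (X 0 : MvPolynomial (Fin 2) ℤ) ^ lcard (coarse k) * X 1 ^ lcard (fine k) := by
    simp only [gram, enum, part_sup, part_card, h1, h2]
  rw [Matrix.submatrix_apply, this, ← hs]
  refine Finset.sum_congr rfl fun c _ => ?_
  rw [h3 c]
  cases hi : rle i c <;> cases hj : rle j c <;> simp [zeta, hi, hj]

end helpers

/-- a 3-element set has exactly twelve 2-ramified partitions, and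
`det G_3 = Q₁¹² Q₂²⁰ (Q₁ − 2)(Q₂ − 2)(Q₁ − 1)⁷(Q₂ − 1)⁷` in `ℤ[Q₁,Q₂]`. -/
theorem gram_three_det :
    Nat.card (RamPart 3) = 12 ∧
    (gram 3).det =
      X 0 ^ 12 * X 1 ^ 20 * (X 0 - 2) * (X 1 - 2) * (X 0 - 1) ^ 7 * (X 1 - 1) ^ 7 := by
  constructor
  · rw [← Nat.card_congr (Equiv.ofBijective enum enum_bijective)]
    simp
  · rw [← Matrix.det_submatrix_equiv_self (Equiv.ofBijective enum enum_bijective) (gram 3)]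
    change ((gram 3).submatrix enum enum).det = _
    rw [gram_factor, Matrix.det_mul, Matrix.det_mul, Matrix.det_transpose, Matrix.det_diagonal]
    have hz : (zeta (MvPolynomial (Fin 2) ℤ)).det = 1 := by
      convert det_zeta
    rw [hz]
    simp [Fin.prod_univ_succ, moeb]
    ring

end RamifiedGram
end
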